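/- arXiv:1904.00272 — 2 statements merged into one kernel-verified Lean document; each statement's English description precedes it below -/
import Mathlib

section
/- Under the assumptions (i) |∏_{i=0}^{m} β(k+i)| ≤ M |∏_{i=0}^{m} β(j+i)| for all k ≤ j and all m ≥ 0, (ii) |β(k)| ≥ c(1+k) for all k with c > 0, and (iii) Σ_{k=0}^∞ Σ_{j=0}^∞ (max(j,k)+1)^{−2} |μ(j)/μ(k)|² w(k)/w'(j) < ∞, the Hilbert–Schmidt norms of the operators Q_n tend to zero: ‖Q_n‖²_HS ≤ (M²/c²) Σ_{k=0}^∞ Σ_{j=k}^∞ (1+j+n)^{−2} |μ(j)/μ(k)|² w(k)/w'(j) → 0 as n → ∞. -/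
/-- The integral kernel of the operator `Q_n`:
`K_n(k,j) = (∏_{i=0}^{n-1} β(k+i)) / (∏_{i=0}^{n} β(j+i)) · (μ(j)/μ(k))`. -/
noncomputable def Qker (β μ : ℕ → ℂ) (n : ℕ) (k j : ℕ) : ℂ :=
  (∏ i ∈ Finset.range n, β (k + i)) / (∏ i ∈ Finset.range (n + 1), β (j + i)) *
    (μ j / μ k)

/-- The Hilbert–Schmidt summand of `Q_n : ℓ²_{w'} → ℓ²_w` at `(k,j)` (zero off the
region `j ≥ k` where the kernel is supported). -/
noncomputable def HSterm (w w' : ℕ → ℝ) (β μ : ℕ → ℂ) (n : ℕ) (p : ℕ × ℕ) : ℝ :=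
  if p.1 ≤ p.2 then ‖Qker β μ n p.1 p.2‖ ^ 2 * (w p.1 / w' p.2) else 0

/-- The comparison summand `(1+j+n)^{-2} |μ(j)/μ(k)|² w(k)/w'(j)` on `j ≥ k`. -/
noncomputable def Bterm (w w' : ℕ → ℝ) (μ : ℕ → ℂ) (n : ℕ) (p : ℕ × ℕ) : ℝ :=
  if p.1 ≤ p.2 then ((1 + p.2 + n : ℝ))⁻¹ ^ 2 * ‖μ p.2 / μ p.1‖ ^ 2 * (w p.1 / w' p.2)
  else 0

/-!
In the kernel of `Q_n` the numerator has one factor fewer than the denominator, and hypothesis (i)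
bounds the quotient of the two products of length `n` by `M`. What is left is `1 / β (j + n)`, which
is at most `1 / (c * (1 + j + n))` by (ii). Squaring gives a termwise comparison of the
Hilbert–Schmidt sum with the sums on the right-hand side. The terms of the latter decrease to zero
as `n` grows, so dominated convergence gives the limit. The majorant consists of the terms for
`n = 0`, which are the terms of (iii) with `k ≤ j`.
-/

open Filter Topology

section ProductRatio

variable {𝕜 : Type*} [NormedField 𝕜] {M : ℝ}

theorem norm_prod_range_div_prod_range_succ_le {a b : ℕ → 𝕜} {n : ℕ} (hM₀ : 0 ≤ M)
    (hab : ‖∏ i ∈ Finset.range n, a i‖ ≤ M * ‖∏ i ∈ Finset.range n, b i‖) :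
    ‖(∏ i ∈ Finset.range n, a i) / ∏ i ∈ Finset.range (n + 1), b i‖ ≤ M / ‖b n‖ := by
  rw [Finset.prod_range_succ, ← div_div, norm_div, norm_div]
  gcongr
  exact div_le_of_le_mul₀ (norm_nonneg _) hM₀ hab

variable {β : ℕ → 𝕜}

theorem one_le_of_norm_prod_range_succ_le (hβ₀ : β 0 ≠ 0)
    (hM : ∀ k j m : ℕ, k ≤ j →
      ‖∏ i ∈ Finset.range (m + 1), β (k + i)‖ ≤
        M * ‖∏ i ∈ Finset.range (m + 1), β (j + i)‖) : 1 ≤ M := by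
  have h : ‖β 0‖ ≤ M * ‖β 0‖ := by simpa using hM 0 0 0 le_rfl
  exact (le_mul_iff_one_le_left (norm_pos_iff.mpr hβ₀)).mp h

theorem norm_prod_range_le_of_norm_prod_range_succ_le (hβ₀ : β 0 ≠ 0)
    (hM : ∀ k j m : ℕ, k ≤ j →
      ‖∏ i ∈ Finset.range (m + 1), β (k + i)‖ ≤
        M * ‖∏ i ∈ Finset.range (m + 1), β (j + i)‖)
    {k j : ℕ} (hkj : k ≤ j) (n : ℕ) :
    ‖∏ i ∈ Finset.range n, β (k + i)‖ ≤ M * ‖∏ i ∈ Finset.range n, β (j + i)‖ := by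
  cases n with
  | zero => simpa using one_le_of_norm_prod_range_succ_le hβ₀ hM
  | succ m => exact hM k j m hkj

end ProductRatio

section KernelBound

variable {β : ℕ → ℂ} {M : ℝ}

theorem norm_Qker_le (μ : ℕ → ℂ) {n k j : ℕ} (hM₀ : 0 ≤ M)
    (hprod : ‖∏ i ∈ Finset.range n, β (k + i)‖ ≤ M * ‖∏ i ∈ Finset.range n, β (j + i)‖) :
    ‖Qker β μ n k j‖ ≤ M / ‖β (j + n)‖ * ‖μ j / μ k‖ := by
  rw [Qker, norm_mul]
  gcongr
  exact norm_prod_range_div_prod_range_succ_le hM₀ hprod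

theorem norm_Qker_le_of_linear_growth (μ : ℕ → ℂ) {c : ℝ} (hc : 0 < c)
    (hM : ∀ k j m : ℕ, k ≤ j →
      ‖∏ i ∈ Finset.range (m + 1), β (k + i)‖ ≤
        M * ‖∏ i ∈ Finset.range (m + 1), β (j + i)‖)
    (hβlow : ∀ k : ℕ, c * (1 + k) ≤ ‖β k‖) (n : ℕ) {k j : ℕ} (hkj : k ≤ j) :
    ‖Qker β μ n k j‖ ≤ M / c * (1 + j + n : ℝ)⁻¹ * ‖μ j / μ k‖ := by
  have hβ₀ : β 0 ≠ 0 := norm_pos_iff.mp (lt_of_lt_of_le (by positivity) (hβlow 0))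
  have hM₀ : 0 ≤ M := zero_le_one.trans (one_le_of_norm_prod_range_succ_le hβ₀ hM)
  have hgrowth : c * (1 + j + n) ≤ ‖β (j + n)‖ := by
    simpa [add_assoc] using hβlow (j + n)
  calc ‖Qker β μ n k j‖
      ≤ M / ‖β (j + n)‖ * ‖μ j / μ k‖ :=
        norm_Qker_le μ hM₀ (norm_prod_range_le_of_norm_prod_range_succ_le hβ₀ hM hkj n)
    _ ≤ M / (c * (1 + j + n)) * ‖μ j / μ k‖ := by gcongr
    _ = M / c * (1 + j + n : ℝ)⁻¹ * ‖μ j / μ k‖ := by rw [← div_div, div_eq_mul_inv (M / c)]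

end KernelBound

section ComparisonSeries

variable {w w' : ℕ → ℝ}

theorem Bterm_nonneg (hw : ∀ k, 0 ≤ w k) (hw' : ∀ k, 0 ≤ w' k)
    (μ : ℕ → ℂ) (n : ℕ) (p : ℕ × ℕ) : 0 ≤ Bterm w w' μ n p := by
  have hweight : 0 ≤ w p.1 / w' p.2 := div_nonneg (hw _) (hw' _)
  unfold Bterm
  split_ifs <;> positivity

theorem antitone_Bterm (hw : ∀ k, 0 ≤ w k) (hw' : ∀ k, 0 ≤ w' k)
    (μ : ℕ → ℂ) (p : ℕ × ℕ) : Antitone fun n => Bterm w w' μ n p := by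
  intro m n hmn
  have hweight : 0 ≤ w p.1 / w' p.2 := div_nonneg (hw _) (hw' _)
  dsimp only [Bterm]
  split_ifs
  · gcongr
  · exact le_rfl

theorem tendsto_Bterm (w w' : ℕ → ℝ) (μ : ℕ → ℂ) (p : ℕ × ℕ) :
    Tendsto (fun n => Bterm w w' μ n p) atTop (𝓝 0) := by
  unfold Bterm
  split_ifs
  · have hinv : Tendsto (fun n : ℕ => (1 + p.2 + n : ℝ)⁻¹) atTop (𝓝 0) :=
      (tendsto_atTop_add_const_left _ _ tendsto_natCast_atTop_atTop).inv_tendsto_atTop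
    simpa using ((hinv.pow 2).mul_const (‖μ p.2 / μ p.1‖ ^ 2)).mul_const (w p.1 / w' p.2)
  · exact tendsto_const_nhds

theorem summable_Bterm (hw : ∀ k, 0 ≤ w k) (hw' : ∀ k, 0 ≤ w' k) {μ : ℕ → ℂ}
    (hsum : Summable (Bterm w w' μ 0)) (n : ℕ) : Summable (Bterm w w' μ n) :=
  hsum.of_nonneg_of_le (Bterm_nonneg hw hw' μ n) fun p => antitone_Bterm hw hw' μ p n.zero_le

theorem tendsto_tsum_Bterm (hw : ∀ k, 0 ≤ w k) (hw' : ∀ k, 0 ≤ w' k) {μ : ℕ → ℂ}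
    (hsum : Summable (Bterm w w' μ 0)) :
    Tendsto (fun n => ∑' p, Bterm w w' μ n p) atTop (𝓝 0) := by
  have hdom : ∀ n p, ‖Bterm w w' μ n p‖ ≤ Bterm w w' μ 0 p := fun n p => by
    rw [Real.norm_of_nonneg (Bterm_nonneg hw hw' μ n p)]
    exact antitone_Bterm hw hw' μ p n.zero_le
  simpa only [tsum_zero] using
    tendsto_tsum_of_dominated_convergence hsum (tendsto_Bterm w w' μ) (.of_forall hdom)

theorem Bterm_zero_le (hw : ∀ k, 0 ≤ w k) (hw' : ∀ k, 0 ≤ w' k) (μ : ℕ → ℂ) (p : ℕ × ℕ) :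
    Bterm w w' μ 0 p ≤
      ((max p.2 p.1 : ℝ) + 1)⁻¹ ^ 2 * ‖μ p.2 / μ p.1‖ ^ 2 * (w p.1 / w' p.2) := by
  have hweight : 0 ≤ w p.1 / w' p.2 := div_nonneg (hw _) (hw' _)
  unfold Bterm
  split_ifs with hp
  · rw [max_eq_left (Nat.cast_le.mpr hp), Nat.cast_zero, add_zero, add_comm]
  · positivity

theorem summable_Bterm_zero (hw : ∀ k, 0 ≤ w k) (hw' : ∀ k, 0 ≤ w' k) {μ : ℕ → ℂ}
    (hsum : Summable fun p : ℕ × ℕ =>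
      ((max p.2 p.1 : ℝ) + 1)⁻¹ ^ 2 * ‖μ p.2 / μ p.1‖ ^ 2 * (w p.1 / w' p.2)) :
    Summable (Bterm w w' μ 0) :=
  hsum.of_nonneg_of_le (Bterm_nonneg hw hw' μ 0) (Bterm_zero_le hw hw' μ)

end ComparisonSeries

section HilbertSchmidtSeries

variable {w w' : ℕ → ℝ} {β μ : ℕ → ℂ} {C : ℝ} {n : ℕ}

theorem HSterm_nonneg (hw : ∀ k, 0 ≤ w k) (hw' : ∀ k, 0 ≤ w' k)
    (β μ : ℕ → ℂ) (n : ℕ) (p : ℕ × ℕ) : 0 ≤ HSterm w w' β μ n p := by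
  have hweight : 0 ≤ w p.1 / w' p.2 := div_nonneg (hw _) (hw' _)
  unfold HSterm
  split_ifs <;> positivity

theorem HSterm_le_mul_Bterm (hw : ∀ k, 0 ≤ w k) (hw' : ∀ k, 0 ≤ w' k)
    (hQ : ∀ k j, k ≤ j → ‖Qker β μ n k j‖ ≤ C * (1 + j + n : ℝ)⁻¹ * ‖μ j / μ k‖) (p : ℕ × ℕ) :
    HSterm w w' β μ n p ≤ C ^ 2 * Bterm w w' μ n p := by
  have hweight : 0 ≤ w p.1 / w' p.2 := div_nonneg (hw _) (hw' _)
  unfold HSterm Bterm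
  split_ifs with hp
  · calc ‖Qker β μ n p.1 p.2‖ ^ 2 * (w p.1 / w' p.2)
        ≤ (C * (1 + p.2 + n : ℝ)⁻¹ * ‖μ p.2 / μ p.1‖) ^ 2 * (w p.1 / w' p.2) := by
          gcongr
          exact hQ p.1 p.2 hp
      _ = C ^ 2 * ((1 + p.2 + n : ℝ)⁻¹ ^ 2 * ‖μ p.2 / μ p.1‖ ^ 2 * (w p.1 / w' p.2)) := by ring
  · rw [mul_zero]

theorem summable_HSterm (hw : ∀ k, 0 ≤ w k) (hw' : ∀ k, 0 ≤ w' k)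
    (hQ : ∀ k j, k ≤ j → ‖Qker β μ n k j‖ ≤ C * (1 + j + n : ℝ)⁻¹ * ‖μ j / μ k‖)
    (hB : Summable (Bterm w w' μ n)) : Summable (HSterm w w' β μ n) :=
  (hB.mul_left (C ^ 2)).of_nonneg_of_le (HSterm_nonneg hw hw' β μ n)
    (HSterm_le_mul_Bterm hw hw' hQ)

theorem tsum_HSterm_le (hw : ∀ k, 0 ≤ w k) (hw' : ∀ k, 0 ≤ w' k)
    (hQ : ∀ k j, k ≤ j → ‖Qker β μ n k j‖ ≤ C * (1 + j + n : ℝ)⁻¹ * ‖μ j / μ k‖)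
    (hB : Summable (Bterm w w' μ n)) :
    ∑' p, HSterm w w' β μ n p ≤ C ^ 2 * ∑' p, Bterm w w' μ n p := by
  rw [← tsum_mul_left]
  exact (summable_HSterm hw hw' hQ hB).tsum_le_tsum (HSterm_le_mul_Bterm hw hw' hQ)
    (hB.mul_left (C ^ 2))

end HilbertSchmidtSeries

theorem statement3_general {w w' : ℕ → ℝ} (hw : ∀ k, 0 ≤ w k) (hw' : ∀ k, 0 < w' k)
    {β μ : ℕ → ℂ} (_hμ : ∀ k, μ k ≠ 0) {M c : ℝ} (hc : 0 < c)
    (hM : ∀ k j m : ℕ, k ≤ j →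
      ‖∏ i ∈ Finset.range (m + 1), β (k + i)‖ ≤
        M * ‖∏ i ∈ Finset.range (m + 1), β (j + i)‖)
    (hβlow : ∀ k : ℕ, c * (1 + k) ≤ ‖β k‖) (hsum : Summable (Bterm w w' μ 0)) :
    (∀ n, Summable (HSterm w w' β μ n)) ∧
      (∀ n, ∑' p, HSterm w w' β μ n p ≤ M ^ 2 / c ^ 2 * ∑' p, Bterm w w' μ n p) ∧
      Tendsto (fun n => ∑' p, HSterm w w' β μ n p) atTop (𝓝 0) := by
  have hw'₀ (k : ℕ) : 0 ≤ w' k := (hw' k).le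
  have hQ (n k j : ℕ) (hkj : k ≤ j) := norm_Qker_le_of_linear_growth μ hc hM hβlow n hkj
  have hB (n : ℕ) : Summable (Bterm w w' μ n) := summable_Bterm hw hw'₀ hsum n
  have hbound (n : ℕ) :
      ∑' p, HSterm w w' β μ n p ≤ M ^ 2 / c ^ 2 * ∑' p, Bterm w w' μ n p := by
    simpa only [div_pow] using tsum_HSterm_le hw hw'₀ (hQ n) (hB n)
  have hmajorant : Tendsto (fun n => M ^ 2 / c ^ 2 * ∑' p, Bterm w w' μ n p) atTop (𝓝 0) := by
    simpa only [mul_zero] using (tendsto_tsum_Bterm hw hw'₀ hsum).const_mul (M ^ 2 / c ^ 2)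
  exact ⟨fun n => summable_HSterm hw hw'₀ (hQ n) (hB n), hbound,
    squeeze_zero (fun n => tsum_nonneg (HSterm_nonneg hw hw'₀ β μ n)) hbound hmajorant⟩

/-- under the same hypotheses (i)–(iii), the Hilbert–Schmidt norms of
the operators `Q_n` satisfy the bound
`‖Q_n‖²_HS ≤ (M²/c²) Σ_k Σ_{j≥k} (1+j+n)^{-2} |μ(j)/μ(k)|² w(k)/w'(j)`
and tend to zero as `n → ∞`. -/
theorem statement3 (w w' : ℕ → ℝ) (hw : ∀ k, 0 < w k) (hw' : ∀ k, 0 < w' k)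
    (β μ : ℕ → ℂ) (hβ : ∀ k, β k ≠ 0) (hμ : ∀ k, μ k ≠ 0) (hμ0 : μ 0 = 1)
    (M c : ℝ) (hc : 0 < c)
    (hM : ∀ k j m : ℕ, k ≤ j →
      ‖∏ i ∈ Finset.range (m + 1), β (k + i)‖ ≤
        M * ‖∏ i ∈ Finset.range (m + 1), β (j + i)‖)
    (hβlow : ∀ k : ℕ, c * (1 + k) ≤ ‖β k‖)
    (hsum : Summable fun p : ℕ × ℕ =>
      ((max p.2 p.1 : ℝ) + 1)⁻¹ ^ 2 * ‖μ p.2 / μ p.1‖ ^ 2 * (w p.1 / w' p.2)) :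
    (∀ n : ℕ, ∑' p : ℕ × ℕ, HSterm w w' β μ n p ≤
        (M ^ 2 / c ^ 2) * ∑' p : ℕ × ℕ, Bterm w w' μ n p) ∧
      Filter.Tendsto (fun n : ℕ => ∑' p : ℕ × ℕ, HSterm w w' β μ n p)
        Filter.atTop (nhds 0) := by
  have hw₀ (k : ℕ) : 0 ≤ w k := (hw k).le
  exact (statement3_general hw₀ hw' hμ hc hM hβlow
    (summable_Bterm_zero hw₀ (fun k => (hw' k).le) hsum)).2
end

section
/- Let n ≥ 0 and assume the hypotheses under which Q_n : ℓ²_{w'} → ℓ²_w is a bounded two-sided inverse of D_n and Q_n maps finitely supported sequences to finitely supported sequences. Then the maximal domain of D_n equals its minimal domain: for every f ∈ ℓ²_w with D_n f ∈ ℓ²_{w'} there exists a sequence (f_j) of finitely supported sequences such that f_j → f in ℓ²_w and D_n f_j → D_n f in ℓ²_{w'} (i.e., f lies in the closure of the finitely supported sequences in the graph norm of D_n). -/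
/-- The difference operator `D_n` on sequences. -/
noncomputable def Dn (β μ : ℕ → ℂ) (n : ℕ) (f : ℕ → ℂ) (k : ℕ) : ℂ :=
  β (k + n) * f k - β k * (μ (k + 1) / μ k) * f (k + 1)

/-- The formal kernel vector `h^{(n)}(k) = (∏_{i=0}^{n-1} β(k+i)) / μ(k)`. -/
noncomputable def hker (β μ : ℕ → ℂ) (n : ℕ) (k : ℕ) : ℂ :=
  (∏ i ∈ Finset.range n, β (k + i)) / μ k

/-- Membership in the weighted space `ℓ²_w`: `Σ_k w(k) |f(k)|² < ∞`. -/
def MemL2 (w : ℕ → ℝ) (f : ℕ → ℂ) : Prop :=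
  Summable fun k => w k * ‖f k‖ ^ 2

/-!
Put `h = h^{(n)}`. It spans the kernel of `D_n`, and writing `f = h v` turns `D_n` into a weighted
first difference: `D_n f (k) = β(k+n) h(k) (v(k) - v(k+1))`. So the claim is about the weighted
discrete Sobolev space of all `v` with `∑ α |v|² < ∞` and `∑ κ |v(k) - v(k+1)|² < ∞`, where
`α = w |h|²` has infinite sum and `κ(k) = w'(k) |β(k+n) h(k)|²`. Infinite mass of `α` forces `v`
to tend to `0` along a subsequence. For an index `N` of that subsequence, subtract from `v` the
sequence that is `v` retracted radially to the ball of radius `|v(N)|` before `N`, and `v` itself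
from `N` on. The result has finite support. What has been subtracted is small in both sums by
dominated convergence: it is dominated in the second one because the retraction is Lipschitz with a
constant independent of the radius, and because it fixes `v(N)`, so that no jump is created at `N`.
-/

open Filter Topology

section RadialRetraction

variable {E : Type*} [NormedAddCommGroup E] [NormedSpace ℝ E] {r : ℝ}

/-- The radial retraction of a normed space onto the closed ball of radius `r ≥ 0` about `0`.
At `r = 0` the convention `0 / 0 = 0` gives the constant map `0`, as it should. -/
noncomputable def radialRetraction (r : ℝ) (x : E) : E :=
  (r / max r ‖x‖) • x

lemma norm_radialRetraction (hr : 0 ≤ r) (x : E) : ‖radialRetraction r x‖ = min r ‖x‖ := by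
  rw [radialRetraction, norm_smul, Real.norm_of_nonneg (by positivity)]
  rcases hr.eq_or_lt with rfl | hr
  · simp
  · rw [div_mul_eq_mul_div, div_eq_iff (by positivity), min_mul_max]

lemma radialRetraction_of_norm_le {x : E} (hx : ‖x‖ ≤ r) : radialRetraction r x = x := by
  rw [radialRetraction, max_eq_left hx]
  rcases eq_or_ne r 0 with rfl | hr
  · simp [norm_le_zero_iff.1 hx]
  · rw [div_self hr, one_smul]

lemma norm_radialRetraction_sub_le (hr : 0 ≤ r) (x y : E) :
    ‖radialRetraction r x - radialRetraction r y‖ ≤ 2 * ‖x - y‖ := by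
  wlog hxy : ‖x‖ ≤ ‖y‖ generalizing x y
  · rw [norm_sub_rev, norm_sub_rev x]
    exact this y x (le_of_not_ge hxy)
  have hx := norm_radialRetraction hr x
  have hy := norm_radialRetraction hr y
  have ht_le_s : r / max r ‖y‖ ≤ r / max r ‖x‖ := by
    rcases hr.eq_or_lt with rfl | hr
    · simp
    · gcongr
  simp only [radialRetraction] at hx hy ⊢
  set s := r / max r ‖x‖
  set t := r / max r ‖y‖
  have ht : 0 ≤ t := by positivity
  have ht_one : t ≤ 1 := div_le_one_of_le₀ (le_max_left _ _) (by positivity)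
  rw [norm_smul, Real.norm_of_nonneg (ht.trans ht_le_s)] at hx
  rw [norm_smul, Real.norm_of_nonneg ht] at hy
  have hradial : (s - t) * ‖x‖ ≤ t * ‖x - y‖ := calc
    (s - t) * ‖x‖ = min r ‖x‖ - t * ‖x‖ := by rw [sub_mul, hx]
    _ ≤ min r ‖y‖ - t * ‖x‖ := by gcongr
    _ = t * (‖y‖ - ‖x‖) := by rw [mul_sub, hy]
    _ ≤ t * ‖x - y‖ := by
      gcongr
      rw [norm_sub_rev]
      exact norm_sub_norm_le y x
  calc ‖s • x - t • y‖ = ‖t • (x - y) + (s - t) • x‖ := by congr 1; module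
    _ ≤ t * ‖x - y‖ + (s - t) * ‖x‖ := by
      refine (norm_add_le _ _).trans_eq ?_
      rw [norm_smul, norm_smul, Real.norm_of_nonneg ht, Real.norm_of_nonneg (sub_nonneg.2 ht_le_s)]
    _ ≤ t * ‖x - y‖ + t * ‖x - y‖ := by gcongr
    _ = 2 * (t * ‖x - y‖) := by ring
    _ ≤ 2 * ‖x - y‖ := by gcongr; exact mul_le_of_le_one_left (norm_nonneg _) ht_one

/-- The sequence `v`, with its terms before the index `N` retracted to the ball of radius `‖v N‖`.
The finitely supported approximations of `v` are the differences `v - retractBefore v N`. -/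
noncomputable def retractBefore (v : ℕ → E) (N k : ℕ) : E :=
  if k < N then radialRetraction ‖v N‖ (v k) else v k

variable (v : ℕ → E) {N k : ℕ}

lemma retractBefore_of_ge (h : N ≤ k) : retractBefore v N k = v k :=
  if_neg h.not_gt

lemma retractBefore_of_le (h : k ≤ N) :
    retractBefore v N k = radialRetraction ‖v N‖ (v k) := by
  rcases h.eq_or_lt with rfl | h
  · rw [retractBefore_of_ge v le_rfl, radialRetraction_of_norm_le le_rfl]
  · exact if_pos h

variable (N k) in
lemma norm_retractBefore_le : ‖retractBefore v N k‖ ≤ ‖v k‖ := by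
  rcases le_total k N with h | h
  · rw [retractBefore_of_le v h, norm_radialRetraction (norm_nonneg _)]
    exact min_le_right _ _
  · rw [retractBefore_of_ge v h]

variable (N k) in
lemma norm_retractBefore_sub_succ_le :
    ‖retractBefore v N k - retractBefore v N (k + 1)‖ ≤ 2 * ‖v k - v (k + 1)‖ := by
  rcases lt_or_ge k N with h | h
  · rw [retractBefore_of_le v h.le, retractBefore_of_le v h]
    exact norm_radialRetraction_sub_le (norm_nonneg _) _ _
  · rw [retractBefore_of_ge v h, retractBefore_of_ge v (h.trans k.le_succ)]
    exact le_mul_of_one_le_left (norm_nonneg _) one_le_two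

lemma finite_support_sub_retractBefore (N : ℕ) :
    (Function.support fun k => v k - retractBefore v N k).Finite := by
  refine (Set.finite_lt_nat N).subset fun k hk => ?_
  by_contra hkN
  exact hk (by simp only [retractBefore_of_ge v (not_lt.1 hkN), sub_self])

variable {v} in
lemma tendsto_retractBefore {ι : Type*} {l : Filter ι} {φ : ι → ℕ} (hφ : Tendsto φ l atTop)
    (hv : Tendsto (v ∘ φ) l (𝓝 0)) (k : ℕ) :
    Tendsto (fun i => retractBefore v (φ i) k) l (𝓝 0) := by
  refine squeeze_zero_norm' ?_ (tendsto_zero_iff_norm_tendsto_zero.1 hv)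
  filter_upwards [hφ.eventually_ge_atTop k] with i hi
  rw [retractBefore_of_le v hi, norm_radialRetraction (norm_nonneg _)]
  exact min_le_left _ _

end RadialRetraction

section WeightedSpace

variable {w : ℕ → ℝ}

lemma memL2_mul_iff {h v : ℕ → ℂ} :
    MemL2 w (fun k => h k * v k) ↔ MemL2 (fun k => w k * ‖h k‖ ^ 2) v := by
  simp only [MemL2, norm_mul, mul_pow, mul_assoc]

lemma MemL2.tendsto_tsum_zero_of_dominated {ι : Type*} {l : Filter ι} (hw : ∀ k, 0 ≤ w k)
    {g : ℕ → ℂ} (hg : MemL2 w g) {u : ι → ℕ → ℂ} {C : ℝ} (hu : ∀ i k, ‖u i k‖ ≤ C * ‖g k‖)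
    (hlim : ∀ k, Tendsto (fun i => u i k) l (𝓝 0)) :
    Tendsto (fun i => ∑' k, w k * ‖u i k‖ ^ 2) l (𝓝 0) := by
  have hterm : ∀ k, Tendsto (fun i => w k * ‖u i k‖ ^ 2) l (𝓝 0) := fun k => by
    simpa using ((hlim k).norm.pow 2).const_mul (w k)
  have hbound : ∀ i k, ‖w k * ‖u i k‖ ^ 2‖ ≤ C ^ 2 * (w k * ‖g k‖ ^ 2) := fun i k => by
    rw [Real.norm_of_nonneg (mul_nonneg (hw k) (by positivity))]
    calc w k * ‖u i k‖ ^ 2 ≤ w k * (C * ‖g k‖) ^ 2 := by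
          have := hw k
          gcongr
          exact hu i k
      _ = C ^ 2 * (w k * ‖g k‖ ^ 2) := by ring
  simpa using tendsto_tsum_of_dominated_convergence (hg.mul_left (C ^ 2)) hterm
    (Eventually.of_forall hbound)

lemma MemL2.mapClusterPt_zero (hw : ∀ k, 0 ≤ w k) (hdiv : ¬ Summable w) {v : ℕ → ℂ}
    (hv : MemL2 w v) : MapClusterPt 0 atTop v := by
  rw [Metric.nhds_basis_ball.mapClusterPt_iff_frequently]
  intro ε hε hfar
  refine hdiv (.of_norm_bounded_eventually_nat (hv.mul_left (ε ^ 2)⁻¹) ?_)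
  filter_upwards [hfar] with k hk
  have hεk : ε ≤ ‖v k‖ := by simpa using hk
  rw [Real.norm_of_nonneg (hw k), inv_mul_eq_div, le_div_iff₀ (by positivity)]
  have := hw k
  gcongr

theorem exists_finite_support_tendsto_of_not_summable {α κ : ℕ → ℝ} (hα : ∀ k, 0 ≤ α k)
    (hκ : ∀ k, 0 ≤ κ k) (hdiv : ¬ Summable α) {v : ℕ → ℂ} (hv : MemL2 α v)
    (hΔv : MemL2 κ fun k => v k - v (k + 1)) :
    ∃ V : ℕ → ℕ → ℂ, (∀ j, (Function.support (V j)).Finite) ∧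
      Tendsto (fun j => ∑' k, α k * ‖V j k - v k‖ ^ 2) atTop (𝓝 0) ∧
      Tendsto (fun j => ∑' k, κ k * ‖V j k - V j (k + 1) - (v k - v (k + 1))‖ ^ 2)
        atTop (𝓝 0) := by
  obtain ⟨φ, hφ, hvφ⟩ := (hv.mapClusterPt_zero hα hdiv).tendsto_subseq
  have hlim := tendsto_retractBefore hφ.tendsto_atTop hvφ
  refine ⟨fun j k => v k - retractBefore v (φ j) k,
    fun j => finite_support_sub_retractBefore v (φ j), ?_, ?_⟩
  · simp only [sub_sub_cancel_left, norm_neg]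
    exact hv.tendsto_tsum_zero_of_dominated hα (C := 1)
      (fun j k => by simpa using norm_retractBefore_le v (φ j) k) hlim
  · have hΔerror : ∀ j k, v k - retractBefore v (φ j) k -
        (v (k + 1) - retractBefore v (φ j) (k + 1)) - (v k - v (k + 1)) =
          -(retractBefore v (φ j) k - retractBefore v (φ j) (k + 1)) := fun j k => by ring
    simp only [hΔerror, norm_neg]
    exact hΔv.tendsto_tsum_zero_of_dominated hκ
      (fun j k => norm_retractBefore_sub_succ_le v (φ j) k)
      (fun k => by simpa using (hlim k).sub (hlim (k + 1)))

end WeightedSpace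

section DifferenceOperator

variable {β μ : ℕ → ℂ}

lemma hker_ne_zero (hβ : ∀ k, β k ≠ 0) (hμ : ∀ k, μ k ≠ 0) (n k : ℕ) : hker β μ n k ≠ 0 :=
  div_ne_zero (Finset.prod_ne_zero_iff.2 fun _ _ => hβ _) (hμ k)

lemma mul_hker_succ (hμ : ∀ k, μ k ≠ 0) (n k : ℕ) :
    β k * (μ (k + 1) / μ k) * hker β μ n (k + 1) = β (k + n) * hker β μ n k := by
  have hprod : β k * ∏ i ∈ Finset.range n, β (k + 1 + i) =
      β (k + n) * ∏ i ∈ Finset.range n, β (k + i) := by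
    simp only [add_right_comm k 1, add_assoc k]
    rw [mul_comm, mul_comm (β (k + n)), ← Finset.prod_range_succ fun i => β (k + i),
      Finset.prod_range_succ' fun i => β (k + i), add_zero]
  have := hμ k
  have := hμ (k + 1)
  simp only [hker]
  field_simp
  exact hprod

lemma Dn_hker_mul (hμ : ∀ k, μ k ≠ 0) (n : ℕ) (v : ℕ → ℂ) (k : ℕ) :
    Dn β μ n (fun k => hker β μ n k * v k) k =
      β (k + n) * hker β μ n k * (v k - v (k + 1)) := by
  rw [Dn, ← mul_assoc _ (hker β μ n (k + 1)), mul_hker_succ hμ]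
  ring

theorem statement6_general {w w' : ℕ → ℝ} (hw : ∀ k, 0 ≤ w k) (hw' : ∀ k, 0 ≤ w' k)
    (hβ : ∀ k, β k ≠ 0) (hμ : ∀ k, μ k ≠ 0) {n : ℕ} (hdiv : ¬ MemL2 w (hker β μ n))
    {f : ℕ → ℂ} (hf : MemL2 w f) (hDf : MemL2 w' (Dn β μ n f)) :
    ∃ F : ℕ → ℕ → ℂ, (∀ j, (Function.support (F j)).Finite) ∧
      Tendsto (fun j => ∑' k, w k * ‖F j k - f k‖ ^ 2) atTop (𝓝 0) ∧
      Tendsto (fun j => ∑' k, w' k * ‖Dn β μ n (F j) k - Dn β μ n f k‖ ^ 2) atTop (𝓝 0) := by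
  obtain ⟨v, rfl⟩ : ∃ v : ℕ → ℂ, f = fun k => hker β μ n k * v k :=
    ⟨fun k => f k / hker β μ n k,
      funext fun k => (mul_div_cancel₀ (f k) (hker_ne_zero hβ hμ n k)).symm⟩
  have hDv : MemL2 w' fun k => β (k + n) * hker β μ n k * (v k - v (k + 1)) := by
    simpa only [funext (Dn_hker_mul hμ n v)] using hDf
  obtain ⟨V, hV_supp, hV, hΔV⟩ := exists_finite_support_tendsto_of_not_summable
    (fun k => mul_nonneg (hw k) (sq_nonneg _)) (fun k => mul_nonneg (hw' k) (sq_nonneg _))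
    hdiv (memL2_mul_iff.1 hf) (memL2_mul_iff.1 hDv)
  refine ⟨fun j k => hker β μ n k * V j k,
    fun j => (hV_supp j).subset (Function.support_mul_subset_right _ _), ?_, ?_⟩
  · simpa only [← mul_sub, norm_mul, mul_pow, mul_assoc] using hV
  · simpa only [Dn_hker_mul hμ, ← mul_sub, norm_mul, mul_pow, mul_assoc] using hΔV

end DifferenceOperator

/-- under the hypotheses under which `Q_n` is a bounded two-sided
inverse of `D_n` (mapping finitely supported sequences to finitely supported
sequences), the maximal domain of `D_n` equals its minimal domain: every
`f ∈ ℓ²_w` with `D_n f ∈ ℓ²_{w'}` is a limit, in the graph norm of `D_n`, of a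
sequence of finitely supported sequences. -/
theorem statement6 (w w' : ℕ → ℝ) (hw : ∀ k, 0 < w k) (hw' : ∀ k, 0 < w' k)
    (β μ : ℕ → ℂ) (hβ : ∀ k, β k ≠ 0) (hμ : ∀ k, μ k ≠ 0) (hμ0 : μ 0 = 1)
    (M c : ℝ) (hc : 0 < c)
    (hM : ∀ k j m : ℕ, k ≤ j →
      ‖∏ i ∈ Finset.range (m + 1), β (k + i)‖ ≤
        M * ‖∏ i ∈ Finset.range (m + 1), β (j + i)‖)
    (hβlow : ∀ k : ℕ, c * (1 + k) ≤ ‖β k‖)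
    (hsum : Summable fun p : ℕ × ℕ =>
      ((max p.2 p.1 : ℝ) + 1)⁻¹ ^ 2 * ‖μ p.2 / μ p.1‖ ^ 2 * (w p.1 / w' p.2))
    (n : ℕ) (hdiv : ¬ MemL2 w (hker β μ n)) :
    ∀ f : ℕ → ℂ, MemL2 w f → MemL2 w' (Dn β μ n f) →
      ∃ F : ℕ → (ℕ → ℂ),
        (∀ j : ℕ, (Function.support (F j)).Finite) ∧
        Filter.Tendsto (fun j : ℕ => ∑' k : ℕ, w k * ‖F j k - f k‖ ^ 2)
          Filter.atTop (nhds 0) ∧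
        Filter.Tendsto
          (fun j : ℕ => ∑' k : ℕ, w' k * ‖Dn β μ n (F j) k - Dn β μ n f k‖ ^ 2)
          Filter.atTop (nhds 0) := by
  intro f hf hDf
  exact statement6_general (fun k => (hw k).le) (fun k => (hw' k).le) hβ hμ hdiv hf hDf
end
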